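/- Let U ⊆ ℝ² be open, let u : ℝ² → ℝ be real-analytic on U, and let z₀ ∈ U be a local minimum point of u. Then for every ε > 0 such that the closed ball of radius ε around z₀ is contained in U, there exists δ > 0 with the following property: for every T ∈ (0,∞] and every differentiable γ : [0,T) → ℝ² with γ(0) in the open ball of radius δ around z₀ and γ′(t) = −∇u(γ(t)) for all t ∈ [0,T), one has γ(t) in the open ball of radius ε around z₀ for all t ∈ [0,T); moreover, if T = ∞, then γ(t) converges as t → +∞ to a point of the closed ball of radius ε around z₀. -/

import Mathlib

open Metric Set Filter Topology MeasureTheory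

noncomputable section

abbrev E2 := EuclideanSpace ℝ (Fin 2)

/-- A Lojasiewicz gradient inequality holds near `p`. -/
def Good (u : E2 → ℝ) (p : E2) : Prop :=
  ∃ k : ℕ, ∃ C > 0, ∀ᶠ z in 𝓝 p, |u z - u p| ^ k ≤ C * ‖gradient u z‖ ^ (k + 1)

/-- Gradient descent trajectory on a closed interval (with right derivatives). -/
def IsTraj (u : E2 → ℝ) (γ : ℝ → E2) (a b : ℝ) : Prop :=
  ContinuousOn γ (Icc a b) ∧
    ∀ t ∈ Ico a b, HasDerivWithinAt γ (-(gradient u (γ t))) (Ici t) t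

lemma IsTraj.mono {u : E2 → ℝ} {γ : ℝ → E2} {a b a' b' : ℝ} (h : IsTraj u γ a b)
    (ha : a ≤ a') (hb : b' ≤ b) : IsTraj u γ a' b' :=
  ⟨h.1.mono (Icc_subset_Icc ha hb), fun t ht => h.2 t ⟨ha.trans ht.1, ht.2.trans_le hb⟩⟩

lemma traj_hasDeriv {u : E2 → ℝ} {γ : ℝ → E2} {t : ℝ}
    (hγ : HasDerivWithinAt γ (-(gradient u (γ t))) (Ici t) t)
    (hu : DifferentiableAt ℝ u (γ t)) :
    HasDerivWithinAt (fun s => u (γ s)) (-‖gradient u (γ t)‖ ^ 2) (Ici t) t := by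
  have h1 := hu.hasGradientAt.hasFDerivAt
  have h2 := h1.comp_hasDerivWithinAt t hγ
  rw [map_neg, InnerProductSpace.toDual_apply_apply, real_inner_self_eq_norm_sq] at h2
  exact h2

lemma traj_anti {u : E2 → ℝ} {γ : ℝ → E2} {a b : ℝ} (h : IsTraj u γ a b)
    (hd : ∀ t ∈ Icc a b, DifferentiableAt ℝ u (γ t)) : AntitoneOn (fun t => u (γ t)) (Icc a b) := by
  intro s hs t ht hst
  have hT := h.mono hs.1 ht.2
  have hd' : ∀ r ∈ Icc s t, DifferentiableAt ℝ u (γ r) :=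
    fun r hr => hd r ⟨hs.1.trans hr.1, hr.2.trans ht.2⟩
  refine image_le_of_deriv_right_le_deriv_boundary (f := fun t => u (γ t))
    (f' := fun t => -‖gradient u (γ t)‖ ^ 2) (a := s) (b := t)
    (B := fun _ => u (γ s)) (B' := fun _ => 0) ?_ ?_ le_rfl ?_ ?_ ?_ (right_mem_Icc.2 hst)
  · intro r hr
    exact (hd' r hr).continuousAt.comp_continuousWithinAt (hT.1 r hr)
  · intro r hr
    exact traj_hasDeriv (hT.2 r hr) (hd' r ⟨hr.1, hr.2.le⟩)
  · exact continuousOn_const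
  · intro r hr
    exact hasDerivWithinAt_const _ _ _
  · intro r hr
    have := sq_nonneg ‖gradient u (γ r)‖
    linarith

lemma traj_length {u : E2 → ℝ} {γ : ℝ → E2} {a b c C : ℝ} {k : ℕ} (hab : a ≤ b)
    (h : IsTraj u γ a b) (hC : 0 < C)
    (hd : ∀ t ∈ Icc a b, DifferentiableAt ℝ u (γ t))
    (hL : ∀ t ∈ Icc a b, |u (γ t) - c| ^ k ≤ C * ‖gradient u (γ t)‖ ^ (k + 1))
    (hc : ∀ t ∈ Icc a b, c ≤ u (γ t)) :
    ‖γ b - γ a‖ ≤ ((k + 1 : ℝ) * C ^ (1 / (k + 1 : ℝ))) *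
      ((u (γ a) - c) ^ (1 / (k + 1 : ℝ)) - (u (γ b) - c) ^ (1 / (k + 1 : ℝ))) := by
  have hk : (0 : ℝ) < k + 1 := by positivity
  set θ : ℝ := 1 / (k + 1 : ℝ) with hθ
  have hθ0 : 0 < θ := by positivity
  set K : ℝ := (k + 1 : ℝ) * C ^ θ with hK
  have hucont : ContinuousOn (fun t => u (γ t)) (Icc a b) := fun r hr =>
    (hd r hr).continuousAt.comp_continuousWithinAt (h.1 r hr)
  have hanti := traj_anti h hd
  let B' : ℝ → ℝ := fun t => if u (γ t) = c then 0 else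
    K * (0 - (-‖gradient u (γ t)‖ ^ 2) * θ * (u (γ t) - c) ^ (θ - 1))
  have hzero : ∀ x ∈ Ico a b, u (γ x) = c → ∀ᶠ y in 𝓝[≥] x, u (γ y) = c := by
    intro x hx hx0
    have : Icc x b ∈ 𝓝[≥] x := Icc_mem_nhdsGE hx.2
    filter_upwards [this] with y hy
    have hy' : y ∈ Icc a b := ⟨hx.1.trans hy.1, hy.2⟩
    have h1 := hanti ⟨hx.1, hx.2.le⟩ hy' hy.1
    have h2 := hc y hy'
    simp only at h1
    linarith
  refine image_norm_le_of_norm_deriv_right_le_deriv_boundary' (f := fun t => γ t - γ a)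
    (f' := fun t => -(gradient u (γ t))) (a := a) (b := b)
    (B := fun t => K * ((u (γ a) - c) ^ θ - (u (γ t) - c) ^ θ)) (B' := B')
    (h.1.sub continuousOn_const) (fun x hx => (h.2 x hx).sub_const _) (by simp) ?_ ?_ ?_
    (right_mem_Icc.2 hab)
  · refine continuousOn_const.mul (continuousOn_const.sub ?_)
    exact (hucont.sub continuousOn_const).rpow_const (fun x hx => Or.inr hθ0.le)
  · intro x hx
    have hx' : x ∈ Icc a b := ⟨hx.1, hx.2.le⟩
    by_cases hx0 : u (γ x) = c
    · simp only [B', hx0, if_true]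
      have : (fun t => K * ((u (γ a) - c) ^ θ - (u (γ t) - c) ^ θ)) =ᶠ[𝓝[≥] x]
          fun _ => K * ((u (γ a) - c) ^ θ - (u (γ x) - c) ^ θ) := by
        filter_upwards [hzero x hx hx0] with y hy
        rw [hy, hx0]
      exact (hasDerivWithinAt_const _ _ _).congr_of_eventuallyEq this rfl
    · simp only [B', hx0, if_false]
      have h1 := (traj_hasDeriv (h.2 x hx) (hd x hx')).sub_const c
      have h2 := h1.rpow_const (p := θ) (Or.inl (sub_ne_zero.2 hx0))
      exact ((hasDerivWithinAt_const _ _ _).sub h2).const_mul K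
  · intro x hx
    have hx' : x ∈ Icc a b := ⟨hx.1, hx.2.le⟩
    rw [norm_neg]
    by_cases hx0 : u (γ x) = c
    · simp only [B', hx0, if_true]
      have h1 := traj_hasDeriv (h.2 x hx) (hd x hx')
      have h2 : HasDerivWithinAt (fun s => u (γ s)) 0 (Ici x) x := by
        refine (hasDerivWithinAt_const x (Ici x) c).congr_of_eventuallyEq ?_ hx0
        filter_upwards [hzero x hx hx0] with y hy using hy
      have h3 := (uniqueDiffOn_Ici x x self_mem_Ici).eq_deriv _ h1 h2
      have : ‖gradient u (γ x)‖ = 0 := by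
        have : ‖gradient u (γ x)‖ ^ 2 = 0 := by linarith
        simpa using this
      rw [this]
    · simp only [B', hx0, if_false]
      have hpos : 0 < u (γ x) - c := sub_pos.2 (lt_of_le_of_ne (hc x hx') (Ne.symm hx0))
      set v := u (γ x) - c with hv
      set g := ‖gradient u (γ x)‖ with hg
      have hg0 : 0 ≤ g := norm_nonneg _
      have hLx := hL x hx'
      rw [← hv, abs_of_pos hpos, ← hg] at hLx
      have e1 : v ^ ((k : ℝ) * θ) ≤ C ^ θ * g := by
        have := Real.rpow_le_rpow (by positivity) hLx hθ0.le
        rw [Real.mul_rpow hC.le (by positivity), ← Real.rpow_natCast, ← Real.rpow_mul hpos.le,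
          ← Real.rpow_natCast, ← Real.rpow_mul hg0] at this
        have e : ((k + 1 : ℕ) : ℝ) * θ = 1 := by
          rw [hθ]; push_cast; field_simp
        rwa [e, Real.rpow_one] at this
      have e2 : θ - 1 = -((k : ℝ) * θ) := by
        rw [hθ]; field_simp; ring
      have e3 : K * θ = C ^ θ := by
        rw [hK, hθ]; field_simp
      have hw : 0 < v ^ ((k : ℝ) * θ) := Real.rpow_pos_of_pos hpos _
      rw [e2, Real.rpow_neg hpos.le]
      have : K * (0 - -g ^ 2 * θ * (v ^ ((k : ℝ) * θ))⁻¹) =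
          (C ^ θ * g) * g / (v ^ ((k : ℝ) * θ)) := by
        rw [← e3]; field_simp; ring
      rw [this, le_div_iff₀ hw]
      nlinarith

lemma first_hit {f : ℝ → ℝ} {a b r : ℝ} (hf : ContinuousOn f (Icc a b)) (ha : f a < r)
    (hab : a ≤ b) (hb : r ≤ f b) :
    ∃ t ∈ Icc a b, f t = r ∧ ∀ s ∈ Ico a t, f s < r := by
  have hS : IsCompact {t | t ∈ Icc a b ∧ r ≤ f t} := by
    have : {t | t ∈ Icc a b ∧ r ≤ f t} = Icc a b ∩ f ⁻¹' Ici r := by ext; simp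
    rw [this]
    exact isCompact_Icc.of_isClosed_subset (hf.preimage_isClosed_of_isClosed isClosed_Icc isClosed_Ici)
      inter_subset_left
  obtain ⟨t, ⟨ht, htr⟩, hmin⟩ := hS.exists_isLeast ⟨b, right_mem_Icc.2 hab, hb⟩
  have hlt : ∀ s ∈ Ico a t, f s < r := by
    intro s hs
    by_contra hcon
    exact absurd (hmin ⟨⟨hs.1, hs.2.le.trans ht.2⟩, not_lt.1 hcon⟩) (not_le.2 hs.2)
  refine ⟨t, ht, ?_, hlt⟩
  obtain ⟨s, hs, hsr⟩ := intermediate_value_Icc ht.1 (hf.mono (Icc_subset_Icc le_rfl ht.2)) ⟨ha.le, htr⟩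
  rcases eq_or_lt_of_le hs.2 with rfl | hlt'
  · exact hsr
  · exact absurd hsr (hlt s ⟨hs.1, hlt'⟩).ne

/-- Quantitative neighbourhood lemma around a good point. -/
lemma good_stay {u : E2 → ℝ} {p : E2} (hg : Good u p) (han : AnalyticAt ℝ u p) {ρ₀ : ℝ}
    (hρ₀ : 0 < ρ₀) :
    ∃ ρ > 0, ρ ≤ ρ₀ ∧ ∃ K : ℝ, ∃ θ : ℝ, 0 < θ ∧ 0 ≤ K ∧ ∃ δ > 0, δ ≤ ρ ∧ ∀ (γ : ℝ → E2) (a b : ℝ),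
      IsTraj u γ a b → a ≤ b → γ a ∈ ball p δ →
      (∀ t ∈ Icc a b, γ t ∈ ball p ρ → u p ≤ u (γ t)) →
      (∀ t ∈ Icc a b, γ t ∈ ball p ρ) ∧
      ‖γ b - γ a‖ ≤ K * ((u (γ a) - u p) ^ θ - (u (γ b) - u p) ^ θ) := by
  obtain ⟨k, C, hC, hev⟩ := hg
  have hev2 : ∀ᶠ z in 𝓝 p, AnalyticAt ℝ u z := han.eventually_analyticAt
  obtain ⟨ρ₁, hρ₁, hball⟩ := Metric.eventually_nhds_iff_ball.1 (hev.and hev2)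
  set ρ := min ρ₁ ρ₀ with hρ
  have hρpos : 0 < ρ := lt_min hρ₁ hρ₀
  set θ : ℝ := 1 / (k + 1 : ℝ) with hθ
  have hθ0 : 0 < θ := by positivity
  set K : ℝ := (k + 1 : ℝ) * C ^ θ with hK
  have hK0 : 0 ≤ K := by positivity
  have hcont : ∀ᶠ z in 𝓝 p, dist z p + K * (u z - u p) ^ θ < ρ := by
    have h1 : ContinuousAt (fun z => dist z p + K * (u z - u p) ^ θ) p := by
      refine (continuousAt_id.dist continuousAt_const).add (continuousAt_const.mul ?_)
      exact (han.continuousAt.sub continuousAt_const).rpow_const (Or.inr hθ0.le)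
    refine h1.eventually_lt continuousAt_const ?_
    simp [Real.zero_rpow hθ0.ne', hρpos]
  obtain ⟨δ, hδ, hδb⟩ := Metric.eventually_nhds_iff_ball.1 hcont
  have hlen : ∀ (γ : ℝ → E2) (a b : ℝ), IsTraj u γ a b → a ≤ b →
      (∀ t ∈ Icc a b, γ t ∈ ball p ρ → u p ≤ u (γ t)) →
      (∀ t ∈ Icc a b, γ t ∈ ball p ρ) →
      ‖γ b - γ a‖ ≤ K * ((u (γ a) - u p) ^ θ - (u (γ b) - u p) ^ θ) := by
    intro γ a b hT hab hc hin
    have hin' : ∀ t ∈ Icc a b, γ t ∈ ball p ρ₁ := fun t ht => ball_subset_ball (min_le_left _ _) (hin t ht)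
    exact traj_length hab hT hC (fun t ht => (hball _ (hin' t ht)).2.differentiableAt)
      (fun t ht => (hball _ (hin' t ht)).1) (fun t ht => hc t ht (hin t ht))
  refine ⟨ρ, hρpos, min_le_right _ _, K, θ, hθ0, hK0, min δ ρ, lt_min hδ hρpos, min_le_right _ _, ?_⟩
  intro γ a b hT hab hγa hc
  have hin : ∀ t ∈ Icc a b, γ t ∈ ball p ρ := by
    by_contra! hcon
    obtain ⟨t, ht, hout⟩ := hcon
    have hs := hδb (γ a) (ball_subset_ball (min_le_left _ _) hγa)
    set r0 := dist (γ a) p + K * (u (γ a) - u p) ^ θ with hr0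
    have hua : 0 ≤ (u (γ a) - u p) ^ θ := Real.rpow_nonneg
      (sub_nonneg.2 (hc a (left_mem_Icc.2 hab) (ball_subset_ball (min_le_right _ _) hγa))) _
    obtain ⟨r1, hr1, hr1'⟩ := exists_between hs
    have hda : dist (γ a) p < r1 := by
      have := mul_nonneg hK0 hua
      linarith
    have hTt := hT.mono le_rfl ht.2
    obtain ⟨t1, ht1, heq, hlt⟩ := first_hit (f := fun s => dist (γ s) p) (a := a) (b := t) (r := r1)
      (continuous_id.dist continuous_const |>.comp_continuousOn hTt.1) hda ht.1 (by
        rw [mem_ball, not_lt] at hout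
        linarith)
    have hin1 : ∀ s ∈ Icc a t1, γ s ∈ ball p ρ := by
      intro s hs
      rw [mem_ball]
      rcases eq_or_lt_of_le hs.2 with rfl | h
      · linarith
      · have := hlt s ⟨hs.1, h⟩
        linarith
    have ht1b : t1 ≤ b := ht1.2.trans ht.2
    have hl := hlen γ a t1 (hT.mono le_rfl ht1b) ht1.1
      (fun s hs => hc s ⟨hs.1, hs.2.trans ht1b⟩) hin1
    have hub : 0 ≤ (u (γ t1) - u p) ^ θ := Real.rpow_nonneg
      (sub_nonneg.2 (hc t1 ⟨ht1.1, ht1b⟩ (hin1 t1 (right_mem_Icc.2 ht1.1)))) _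
    have htri := dist_triangle (γ t1) (γ a) p
    rw [dist_eq_norm (γ t1) (γ a)] at htri
    have := mul_nonneg hK0 hub
    rw [mul_sub] at hl
    linarith
  exact ⟨hin, hlen γ a b hT hab hc hin⟩

lemma exists_radius {S : Set ℝ} (hS : S.Countable) {R : ℝ} (hR : 0 < R) :
    ∃ r, 0 < r ∧ r < R ∧ r ∉ S := by
  by_contra! hcon
  have : Ioo 0 R ⊆ S := fun r hr => hcon r hr.1 hr.2
  have h2 := hS.mono this
  have := Cardinal.mk_Ioo_real hR
  rw [← Cardinal.le_aleph0_iff_set_countable, this] at h2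
  exact absurd h2 (not_le.2 Cardinal.aleph0_lt_continuum)

lemma stab_core {u : E2 → ℝ} {z₀ : E2} {R : ℝ} (hR : 0 < R)
    (hAn : ∀ z ∈ ball z₀ R, AnalyticAt ℝ u z) (hmin : ∀ z ∈ ball z₀ R, u z₀ ≤ u z)
    (hbad : {z | z ∈ ball z₀ R ∧ ¬ Good u z}.Countable) :
    ∃ R' < R, ∃ δ > 0, ∀ (γ : ℝ → E2) (b : ℝ), 0 ≤ b → IsTraj u γ 0 b → γ 0 ∈ ball z₀ δ →
      ∀ t ∈ Icc 0 b, γ t ∈ closedBall z₀ R' := by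
  obtain ⟨r, hr0, hrR, hrS⟩ := exists_radius (hbad.image (fun z => dist z z₀)) hR
  have hgood : ∀ p ∈ sphere z₀ r, Good u p := by
    intro p hp
    by_contra hcon
    exact hrS ⟨p, ⟨by rw [mem_ball, mem_sphere.1 hp]; exact hrR, hcon⟩, mem_sphere.1 hp⟩
  set R' := (r + R) / 2 with hR'
  have hR'R : R' < R := by linarith
  have hrR' : r < R' := by linarith
  have hpt : ∀ p ∈ sphere z₀ r, u p = u z₀ → ∃ δ > 0, ∀ (γ : ℝ → E2) (a b : ℝ),
      IsTraj u γ a b → a ≤ b → γ a ∈ ball p δ → ∀ t ∈ Icc a b, γ t ∈ closedBall z₀ R' := by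
    intro p hp hup
    have hpR : p ∈ ball z₀ R := by rw [mem_ball, mem_sphere.1 hp]; exact hrR
    obtain ⟨ρ, hρ, hρle, K, θ, -, -, δ, hδ, -, H⟩ :=
      good_stay (hgood p hp) (hAn p hpR) (ρ₀ := R' - r) (by linarith)
    have hsub : ball p ρ ⊆ closedBall z₀ R' := by
      intro z hz
      rw [mem_closedBall]
      have := dist_triangle z p z₀
      rw [mem_sphere.1 hp] at this
      have := mem_ball.1 hz
      linarith
    refine ⟨δ, hδ, fun γ a b hT hab hγ t ht => hsub ((H γ a b hT hab hγ ?_).1 t ht)⟩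
    intro s hs hsin
    rw [hup]
    exact hmin _ (closedBall_subset_ball hR'R (hsub hsin))
  choose! d hd hdprop using hpt
  let Z : Set E2 := {p | p ∈ sphere z₀ r ∧ u p = u z₀}
  let V : Set E2 := ⋃ p ∈ Z, ball p (d p)
  have hVo : IsOpen V := isOpen_biUnion fun p _ => isOpen_ball
  have hcomp : IsCompact (sphere z₀ r \ V) := (isCompact_sphere z₀ r).diff hVo
  have hsphR : ∀ p ∈ sphere z₀ r, p ∈ ball z₀ R := by
    intro p hp; rw [mem_ball, mem_sphere.1 hp]; exact hrR
  have hm : ∃ m, u z₀ < m ∧ ∀ p ∈ sphere z₀ r \ V, m ≤ u p := by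
    rcases (sphere z₀ r \ V).eq_empty_or_nonempty with he | hne
    · exact ⟨u z₀ + 1, by linarith, by simp [he]⟩
    · obtain ⟨q, hq, hqmin⟩ := hcomp.exists_isMinOn hne
        (fun p hp => (hAn p (hsphR p hp.1)).continuousAt.continuousWithinAt)
      refine ⟨u q, lt_of_le_of_ne (hmin q (hsphR q hq.1)) ?_, fun p hp => hqmin hp⟩
      intro heq
      apply hq.2
      exact mem_biUnion (show q ∈ Z from ⟨hq.1, heq.symm⟩) (mem_ball_self (hd q hq.1 heq.symm))
  obtain ⟨m, hm0, hm1⟩ := hm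
  have hev : ∀ᶠ z in 𝓝 z₀, u z < m :=
    (hAn z₀ (mem_ball_self hR)).continuousAt.eventually_lt continuousAt_const hm0
  obtain ⟨δ, hδ, hδb⟩ := Metric.eventually_nhds_iff_ball.1 hev
  refine ⟨R', hR'R, min δ r, lt_min hδ hr0, ?_⟩
  intro γ b hb hT hγ0 t ht
  by_contra hout
  rw [mem_closedBall, not_le] at hout
  have hγr : dist (γ 0) z₀ < r := mem_ball.1 (ball_subset_ball (min_le_right _ _) hγ0)
  have hγδ : γ 0 ∈ ball z₀ δ := ball_subset_ball (min_le_left _ _) hγ0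
  have hTt := hT.mono le_rfl ht.2
  obtain ⟨t1, ht1, heq, hlt⟩ := first_hit (f := fun s => dist (γ s) z₀) (a := 0) (b := t) (r := r)
    (continuous_id.dist continuous_const |>.comp_continuousOn hTt.1) hγr ht.1 (by linarith)
  have hsph : γ t1 ∈ sphere z₀ r := heq
  have hin : ∀ s ∈ Icc 0 t1, DifferentiableAt ℝ u (γ s) := by
    intro s hs
    apply (hAn _ _).differentiableAt
    rw [mem_ball]
    rcases eq_or_lt_of_le hs.2 with rfl | h
    · linarith
    · have := hlt s ⟨hs.1, h⟩
      linarith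
  have hle := traj_anti (hTt.mono le_rfl ht1.2) hin (left_mem_Icc.2 ht1.1) (right_mem_Icc.2 ht1.1) ht1.1
  have hlt2 : u (γ t1) < m := lt_of_le_of_lt hle (hδb _ hγδ)
  have hV : γ t1 ∈ V := by
    by_contra hcon
    exact absurd (hm1 _ ⟨hsph, hcon⟩) (not_le.2 hlt2)
  obtain ⟨p, hpZ, hp⟩ := mem_iUnion₂.1 hV
  have := hdprop p hpZ.1 hpZ.2 γ t1 t (hTt.mono ht1.1 le_rfl) ht1.2 hp t (right_mem_Icc.2 ht1.2)
  rw [mem_closedBall] at this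
  linarith

lemma conv_core {u : E2 → ℝ} {z₀ : E2} {R R' : ℝ} (hR' : R' < R)
    (hAn : ∀ z ∈ ball z₀ R, AnalyticAt ℝ u z)
    (hbad : {z | z ∈ ball z₀ R ∧ ¬ Good u z}.Countable)
    (γ : ℝ → E2) (hT : ∀ b, IsTraj u γ 0 b) (hin : ∀ t, 0 ≤ t → γ t ∈ closedBall z₀ R') :
    ∃ zlim ∈ closedBall z₀ R', Tendsto γ atTop (𝓝 zlim) := by
  have hK : IsCompact (closedBall z₀ R') := isCompact_closedBall z₀ R'
  have hsub : closedBall z₀ R' ⊆ ball z₀ R := closedBall_subset_ball hR'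
  have hanti : ∀ s t, 0 ≤ s → s ≤ t → u (γ t) ≤ u (γ s) := by
    intro s t hs hst
    exact traj_anti (hT t) (fun r hr => (hAn _ (hsub (hin r hr.1))).differentiableAt)
      ⟨hs, hst⟩ ⟨hs.trans hst, le_rfl⟩ hst
  have hin' : ∀ᶠ t in atTop, γ t ∈ closedBall z₀ R' := by
    filter_upwards [eventually_ge_atTop 0] with t ht using hin t ht
  -- a cluster point is a lower bound
  have hclus_lb : ∀ p ∈ closedBall z₀ R', MapClusterPt p atTop γ → ∀ t, 0 ≤ t → u p ≤ u (γ t) := by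
    intro p hp hcl t ht
    by_contra! hcon
    have hev : ∀ᶠ z in 𝓝 p, u (γ t) < u z :=
      continuousAt_const.eventually_lt (hAn p (hsub hp)).continuousAt hcon
    have hfr := (mapClusterPt_iff_frequently.1 hcl) _ hev
    obtain ⟨s, hs1, hs2⟩ := (hfr.and_eventually (eventually_ge_atTop t)).exists
    exact absurd (hanti t s ht hs2) (not_le.2 hs1)
  obtain ⟨p₀, hp₀, hcl₀⟩ := hK.exists_mapClusterPt_of_frequently hin'.frequently
  by_cases hex : ∃ p ∈ closedBall z₀ R', MapClusterPt p atTop γ ∧ Good u p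
  · obtain ⟨p, hp, hcl, hg⟩ := hex
    refine ⟨p, hp, ?_⟩
    rw [Metric.tendsto_atTop]
    intro η hη
    obtain ⟨ρ, hρ, hρle, K, θ, hθ, hK0, δ, hδ, hδρ, H⟩ := good_stay hg (hAn p (hsub hp)) hη
    have hfr := (mapClusterPt_iff_frequently.1 hcl) _ (ball_mem_nhds p hδ)
    obtain ⟨s, hs1, hs2⟩ := (hfr.and_eventually (eventually_ge_atTop 0)).exists
    refine ⟨s, fun t ht => ?_⟩
    have := (H γ s t ((hT t).mono hs2 le_rfl) ht hs1
      (fun r hr _ => hclus_lb p hp hcl r (hs2.trans hr.1))).1 t (right_mem_Icc.2 ht)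
    exact lt_of_lt_of_le (mem_ball.1 this) hρle
  · refine ⟨p₀, hp₀, ?_⟩
    refine hK.le_nhds_of_unique_clusterPt hin' ?_
    intro q hq hclq
    by_contra hne
    have hpos : 0 < dist q p₀ := dist_pos.2 hne
    obtain ⟨r, hr0, hrd, hrS⟩ := exists_radius (hbad.image (fun z => dist z p₀)) hpos
    have hS : IsCompact (closedBall z₀ R' ∩ sphere p₀ r) := hK.inter_right isClosed_sphere
    have hfr : ∃ᶠ t in atTop, γ t ∈ closedBall z₀ R' ∩ sphere p₀ r := by
      rw [frequently_atTop]
      intro N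
      have h1 := (mapClusterPt_iff_frequently.1 hcl₀) _ (ball_mem_nhds p₀ hr0)
      have h2 := (mapClusterPt_iff_frequently.1 hclq) _
        ((isOpen_lt continuous_const (continuous_id.dist continuous_const)).mem_nhds
          (show q ∈ {z | r < dist (id z) p₀} from hrd))
      obtain ⟨s, hs, hsN⟩ := (h1.and_eventually (eventually_ge_atTop (max N 0))).exists
      obtain ⟨t, ht, hts⟩ := (h2.and_eventually (eventually_ge_atTop s)).exists
      have hs0 : 0 ≤ s := (le_max_right _ _).trans hsN
      have hc : ContinuousOn (fun x => dist (γ x) p₀) (Icc s t) :=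
        continuous_id.dist continuous_const |>.comp_continuousOn ((hT t).mono hs0 le_rfl).1
      obtain ⟨x, hx, hxr⟩ := intermediate_value_Icc hts hc
        (show r ∈ Icc _ _ from ⟨(mem_ball.1 hs).le, le_of_lt ht⟩)
      exact ⟨x, ((le_max_left _ _).trans hsN).trans hx.1, hin x (hs0.trans hx.1), hxr⟩
    obtain ⟨w, hw, hclw⟩ := hS.exists_mapClusterPt_of_frequently hfr
    apply hrS
    refine ⟨w, ⟨hsub hw.1, fun hg => hex ⟨w, hw.1, hclw, hg⟩⟩, hw.2⟩

lemma implicit_analytic {G : ℝ × ℝ → ℝ} {p : ℝ × ℝ} (hG : AnalyticAt ℝ G p) (hG0 : G p = 0)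
    (hne : fderiv ℝ G p (0, 1) ≠ 0) :
    ∃ φ : ℝ → ℝ, AnalyticAt ℝ φ p.1 ∧ φ p.1 = p.2 ∧ ∀ᶠ z in 𝓝 p, G z = 0 → z.2 = φ z.1 := by
  set G' := fderiv ℝ G p with hG'
  set M : ℝ × ℝ →L[ℝ] ℝ × ℝ := (ContinuousLinearMap.fst ℝ ℝ ℝ).prod G' with hM
  have hinj : Function.Injective M := by
    rw [injective_iff_map_eq_zero]
    rintro ⟨a, b⟩ hab
    have h1 : a = 0 := congrArg Prod.fst hab
    have h2 : G' (a, b) = 0 := congrArg Prod.snd hab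
    subst h1
    have h3 : ((0 : ℝ), b) = b • ((0 : ℝ), (1 : ℝ)) := by simp
    rw [h3, map_smul, smul_eq_mul] at h2
    have : b = 0 := by
      rcases mul_eq_zero.1 h2 with h | h
      · exact h
      · exact absurd h hne
    rw [this]; rfl
  let e : (ℝ × ℝ) ≃L[ℝ] (ℝ × ℝ) :=
    (LinearEquiv.ofInjectiveEndo (M : ℝ × ℝ →ₗ[ℝ] ℝ × ℝ) hinj).toContinuousLinearEquiv
  have he : (e : ℝ × ℝ →L[ℝ] ℝ × ℝ) = M := by
    rfl
  let Ψ : ℝ × ℝ → ℝ × ℝ := fun z => (z.1, G z)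
  have hΨa : AnalyticAt ℝ Ψ p := analyticAt_fst.prod hG
  have hΨc : ContDiffAt ℝ ⊤ Ψ p := hΨa.contDiffAt
  have hΨd : HasFDerivAt Ψ (e : ℝ × ℝ →L[ℝ] ℝ × ℝ) p := by
    rw [he]
    exact hasFDerivAt_fst.prodMk hG.differentiableAt.hasFDerivAt
  have htop : (⊤ : WithTop ℕ∞) ≠ 0 := by simp
  have hga : AnalyticAt ℝ (hΨc.localInverse hΨd htop) (Ψ p) :=
    (hΨc.to_localInverse hΨd htop).analyticAt
  have hleft : ∀ᶠ z in 𝓝 p, hΨc.localInverse hΨd htop (Ψ z) = z :=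
    (hΨc.hasStrictFDerivAt' hΨd htop).eventually_left_inverse
  set g := hΨc.localInverse hΨd htop with hg
  have hΨp : Ψ p = (p.1, 0) := by simp [Ψ, hG0]
  refine ⟨fun x => (g (x, 0)).2, ?_, ?_, ?_⟩
  · rw [hΨp] at hga
    have h1 : AnalyticAt ℝ (fun x : ℝ => (x, (0 : ℝ))) p.1 := analyticAt_id.prod analyticAt_const
    exact analyticAt_snd.comp (hga.comp_of_eq h1 rfl)
  · have := hleft.self_of_nhds
    rw [hΨp] at this
    simp only [this]
  · filter_upwards [hleft] with z hz hz0
    have : Ψ z = (z.1, 0) := by simp [Ψ, hz0]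
    rw [this] at hz
    simp only [hz]

lemma chain_taylor (n : ℕ) : ∀ (g : ℕ → ℝ → ℝ) (a y : ℝ),
    (∀ j < n, ∀ t ∈ uIcc a y, HasDerivAt (g j) (g (j + 1) t) t) → (∀ j < n, g j a = 0) →
    ∃ ξ ∈ uIcc a y, g 0 y = g n ξ * (y - a) ^ n / (n.factorial : ℝ) := by
  induction n with
  | zero =>
    intro g a y _ _
    exact ⟨y, right_mem_uIcc, by simp⟩
  | succ n ih =>
    intro g a y hd h0
    rcases eq_or_ne y a with rfl | hya
    · exact ⟨y, right_mem_uIcc, by simp [h0 0 (Nat.succ_pos n)]⟩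
    have hP : ∀ t, HasDerivAt (fun t : ℝ => (t - a) ^ (n + 1)) ((n + 1 : ℝ) * (t - a) ^ n) t := by
      intro t
      have h := ((hasDerivAt_id t).sub_const a).pow (n + 1)
      have e : ((n + 1 : ℕ) : ℝ) * (id t - a) ^ (n + 1 - 1) * 1 = (n + 1 : ℝ) * (t - a) ^ n := by
        simp
      rw [e] at h
      exact h
    have hc : ∃ c ∈ uIcc a y, c ≠ a ∧
        (y - a) ^ (n + 1) * g 1 c = g 0 y * ((n + 1 : ℝ) * (c - a) ^ n) := by
      have hd0 : ∀ t ∈ uIcc a y, HasDerivAt (g 0) (g 1 t) t := hd 0 (Nat.succ_pos n)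
      have h00 := h0 0 (Nat.succ_pos n)
      rcases lt_or_gt_of_ne hya with hlt | hlt
      · rw [uIcc_of_ge hlt.le] at hd0 ⊢
        obtain ⟨c, hc, heq⟩ := exists_ratio_hasDerivAt_eq_ratio_slope (g 0) (g 1) hlt
          (fun t ht => (hd0 t ht).continuousAt.continuousWithinAt)
          (fun t ht => hd0 t (Ioo_subset_Icc_self ht))
          (fun t : ℝ => (t - a) ^ (n + 1)) (fun t => (n + 1 : ℝ) * (t - a) ^ n)
          (fun t _ => (hP t).continuousAt.continuousWithinAt) (fun t _ => hP t)
        refine ⟨c, Ioo_subset_Icc_self hc, hc.2.ne, ?_⟩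
        rw [h00] at heq
        simp only [sub_self, zero_pow (Nat.succ_ne_zero n), zero_sub] at heq
        linarith
      · rw [uIcc_of_le hlt.le] at hd0 ⊢
        obtain ⟨c, hc, heq⟩ := exists_ratio_hasDerivAt_eq_ratio_slope (g 0) (g 1) hlt
          (fun t ht => (hd0 t ht).continuousAt.continuousWithinAt)
          (fun t ht => hd0 t (Ioo_subset_Icc_self ht))
          (fun t : ℝ => (t - a) ^ (n + 1)) (fun t => (n + 1 : ℝ) * (t - a) ^ n)
          (fun t _ => (hP t).continuousAt.continuousWithinAt) (fun t _ => hP t)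
        refine ⟨c, Ioo_subset_Icc_self hc, hc.1.ne', ?_⟩
        rw [h00] at heq
        simp only [sub_self, zero_pow (Nat.succ_ne_zero n), sub_zero] at heq
        linarith
    obtain ⟨c, hc, hca, heq⟩ := hc
    have hsub : uIcc a c ⊆ uIcc a y := uIcc_subset_uIcc left_mem_uIcc hc
    obtain ⟨ξ, hξ, hξeq⟩ := ih (fun j => g (j + 1)) a c
      (fun j hj t ht => hd (j + 1) (Nat.succ_lt_succ hj) t (hsub ht))
      (fun j hj => h0 (j + 1) (Nat.succ_lt_succ hj))
    refine ⟨ξ, hsub hξ, ?_⟩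
    simp only [zero_add] at hξeq
    have hcn : (c - a) ^ n ≠ 0 := pow_ne_zero _ (sub_ne_zero.2 hca)
    have hfac : (n.factorial : ℝ) ≠ 0 := by exact_mod_cast n.factorial_ne_zero
    have hn1 : (n + 1 : ℝ) ≠ 0 := by positivity
    rw [hξeq] at heq
    rw [Nat.factorial_succ]
    push_cast
    field_simp
    field_simp at heq
    linarith

/-- Partial derivative in the second variable. -/
def Dy (F : ℝ × ℝ → ℝ) : ℝ × ℝ → ℝ := fun z => fderiv ℝ F z (0, 1)

lemma Dy_analytic {F : ℝ × ℝ → ℝ} {p : ℝ × ℝ} (h : AnalyticAt ℝ F p) : AnalyticAt ℝ (Dy F) p :=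
  (ContinuousLinearMap.analyticAt (ContinuousLinearMap.apply ℝ ℝ ((0 : ℝ), (1 : ℝ))) _).comp h.fderiv

lemma Dyi_analytic {F : ℝ × ℝ → ℝ} {p : ℝ × ℝ} (h : AnalyticAt ℝ F p) (j : ℕ) :
    AnalyticAt ℝ (Dy^[j] F) p := by
  induction j with
  | zero => exact h
  | succ j ih => rw [Function.iterate_succ_apply']; exact Dy_analytic ih

lemma Dy_hasDerivAt {F : ℝ × ℝ → ℝ} {x t : ℝ} (h : DifferentiableAt ℝ F (x, t)) :
    HasDerivAt (fun s => F (x, s)) (Dy F (x, t)) t := by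
  have h1 : HasDerivAt (fun s : ℝ => (x, s)) ((0 : ℝ), (1 : ℝ)) t :=
    (hasDerivAt_const t x).prodMk (hasDerivAt_id t)
  exact h.hasFDerivAt.comp_hasDerivAt t h1

/-- Critical points at which the order in the second variable is exactly `n + 1`. -/
def SS (F : ℝ × ℝ → ℝ) (n : ℕ) : Set (ℝ × ℝ) :=
  {z | fderiv ℝ F z (1, 0) = 0 ∧ (∀ j < n, Dy^[j + 1] F z = 0) ∧ Dy^[n + 1] F z ≠ 0}

lemma loja_or_isolated {F : ℝ × ℝ → ℝ} {p : ℝ × ℝ} (hF : AnalyticAt ℝ F p) {n : ℕ} (hn : 0 < n)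
    (hp : p ∈ SS F n) :
    (∃ C > 0, ∀ᶠ z in 𝓝 p, |F z - F p| ^ n ≤ C * |Dy F z| ^ (n + 1)) ∨
      ∀ᶠ z in 𝓝[≠] p, z ∉ SS F n := by
  obtain ⟨hp1, hp2, hp3⟩ := hp
  obtain ⟨m, rfl⟩ : ∃ m, n = m + 1 := ⟨n - 1, by omega⟩
  obtain ⟨φ, hφa, hφp, hφ⟩ := implicit_analytic (Dyi_analytic hF (m + 1)) (hp2 m (Nat.lt_succ_self m))
    (by rw [Function.iterate_succ_apply'] at hp3; exact hp3)
  have hcurve : AnalyticAt ℝ (fun x => (x, φ x)) p.1 := analyticAt_id.prod hφa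
  have hcp : (fun x => (x, φ x)) p.1 = p := by simp [hφp]
  -- isolation criterion
  have hiso : ∀ A : ℝ × ℝ → ℝ, AnalyticAt ℝ A p → (∀ z ∈ SS F (m + 1), A z = 0) →
      (∀ᶠ x in 𝓝 p.1, A (x, φ x) = 0) ∨ ∀ᶠ z in 𝓝[≠] p, z ∉ SS F (m + 1) := by
    intro A hA hAS
    have hAa : AnalyticAt ℝ (fun x => A (x, φ x)) p.1 := hA.comp_of_eq hcurve hcp
    rcases hAa.eventually_eq_zero_or_eventually_ne_zero with h | h
    · exact Or.inl h
    · right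
      rw [eventually_nhdsWithin_iff] at h ⊢
      have h' : ∀ᶠ z : ℝ × ℝ in 𝓝 p, z.1 ∈ ({p.1}ᶜ : Set ℝ) → A (z.1, φ z.1) ≠ 0 :=
        continuousAt_fst.eventually h
      filter_upwards [h', hφ] with z hz1 hz2 hzp hzS
      have hz2' := hz2 (hzS.2.1 m (Nat.lt_succ_self m))
      by_cases hx : z.1 = p.1
      · apply hzp
        have : z = p := Prod.ext hx (by rw [hz2', hx, hφp])
        exact this
      · apply hz1 hx
        rw [← hz2']
        exact hAS z hzS
  by_cases hcase : ∀ᶠ z in 𝓝[≠] p, z ∉ SS F (m + 1)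
  · exact Or.inr hcase
  left
  have hx0 : ∀ᶠ x in 𝓝 p.1, fderiv ℝ F (x, φ x) (1, 0) = 0 := by
    refine (hiso (fun z => fderiv ℝ F z (1, 0)) ?_ (fun z hz => hz.1)).resolve_right hcase
    exact (ContinuousLinearMap.analyticAt
      (ContinuousLinearMap.apply ℝ ℝ ((1 : ℝ), (0 : ℝ))) _).comp hF.fderiv
  have hy0 : ∀ j < m + 1, ∀ᶠ x in 𝓝 p.1, Dy^[j + 1] F (x, φ x) = 0 := fun j hj =>
    (hiso (Dy^[j + 1] F) (Dyi_analytic hF _) (fun z hz => hz.2.1 j hj)).resolve_right hcase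
  have hy0' : ∀ᶠ x in 𝓝 p.1, ∀ j < m + 1, Dy^[j + 1] F (x, φ x) = 0 := by
    have := (Set.finite_lt_nat (m + 1)).eventually_all (l := 𝓝 p.1)
      (p := fun j x => Dy^[j + 1] F (x, φ x) = 0)
    exact this.2 hy0
  -- F is constant along the curve
  have hcurvec : Tendsto (fun x => (x, φ x)) (𝓝 p.1) (𝓝 p) := by
    have := hcurve.continuousAt.tendsto
    rwa [show (p.1, φ p.1) = p from hcp] at this
  have hconst : ∀ᶠ x in 𝓝 p.1, F (x, φ x) = F p := by
    have hder : ∀ᶠ x in 𝓝 p.1, HasDerivAt (fun x => F (x, φ x)) 0 x := by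
      filter_upwards [hx0, hy0', hcurvec.eventually hF.eventually_analyticAt,
        hφa.eventually_analyticAt] with x h1 h2 h3 h4
      have hc : HasDerivAt (fun x => (x, φ x)) ((1 : ℝ), deriv φ x) x :=
        (hasDerivAt_id x).prodMk h4.differentiableAt.hasDerivAt
      have h5 := h3.differentiableAt.hasFDerivAt.comp_hasDerivAt x hc
      have h6 : ((1 : ℝ), deriv φ x) = (1, 0) + deriv φ x • ((0 : ℝ), (1 : ℝ)) := by simp
      have h7 : fderiv ℝ F (x, φ x) (0, 1) = 0 := h2 0 (Nat.succ_pos m)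
      rw [h6, map_add, map_smul, h1, h7] at h5
      rw [smul_zero, add_zero] at h5
      exact h5
    obtain ⟨r, hr, hb⟩ := Metric.eventually_nhds_iff_ball.1 hder
    filter_upwards [ball_mem_nhds p.1 hr] with x hx
    have := isOpen_ball.is_const_of_deriv_eq_zero (convex_ball p.1 r).isPreconnected
      (fun y hy => (hb y hy).differentiableAt.differentiableWithinAt)
      (fun y hy => (hb y hy).deriv) hx (mem_ball_self hr)
    rw [this, hφp]
  -- bounds for the top derivative
  set N := m + 1 with hN
  set a := |Dy^[N + 1] F p| with ha
  have ha0 : 0 < a := abs_pos.2 hp3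
  have hTc : ContinuousAt (fun z => |Dy^[N + 1] F z|) p := (Dyi_analytic hF (N + 1)).continuousAt.abs
  have hlow : ∀ᶠ z in 𝓝 p, a / 2 < |Dy^[N + 1] F z| :=
    continuousAt_const.eventually_lt hTc (by linarith)
  have hupp : ∀ᶠ z in 𝓝 p, |Dy^[N + 1] F z| < a + 1 :=
    hTc.eventually_lt continuousAt_const (by linarith)
  obtain ⟨r, hr, hb⟩ := Metric.eventually_nhds_iff_ball.1
    ((hlow.and hupp).and hF.eventually_analyticAt)
  refine ⟨(a + 1) ^ N / (a / 2 / N.factorial) ^ (N + 1), by positivity, ?_⟩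
  have hall := (hy0'.and hconst).and (hcurvec.eventually (ball_mem_nhds p hr))
  filter_upwards [ball_mem_nhds p hr, continuousAt_fst.eventually hall] with z hz hz2
  obtain ⟨⟨hz3, hz4⟩, hz5⟩ := hz2
  obtain ⟨x, y⟩ := z
  simp only at hz3 hz4 hz5
  replace hz5 : (x, φ x) ∈ ball p r := hz5
  rw [← ball_prod_same] at hz hz5
  have hseg : ∀ t ∈ uIcc (φ x) y, (x, t) ∈ ball p r := by
    intro t ht
    rw [← ball_prod_same]
    exact ⟨hz.1, (convex_ball p.2 r).ordConnected.uIcc_subset hz5.2 hz.2 ht⟩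
  have hchain : ∀ j, ∀ t ∈ uIcc (φ x) y,
      HasDerivAt (fun s => Dy^[j] F (x, s)) (Dy^[j + 1] F (x, t)) t := by
    intro j t ht
    rw [Function.iterate_succ_apply']
    exact Dy_hasDerivAt (Dyi_analytic (hb _ (hseg t ht)).2 j).differentiableAt
  obtain ⟨ξ, hξ, hξeq⟩ := chain_taylor (N + 1)
    (fun j s => Dy^[j] F (x, s) - (if j = 0 then F p else 0)) (φ x) y
    (by
      intro j _ t ht
      have := (hchain j t ht).sub_const (if j = 0 then F p else 0)
      simpa using this)
    (by
      intro j hj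
      rcases j with _ | j
      · simp [hz4]
      · simpa using hz3 j (by omega))
  obtain ⟨η, hη, hηeq⟩ := chain_taylor N
    (fun j s => Dy^[j + 1] F (x, s)) (φ x) y
    (fun j _ t ht => hchain (j + 1) t ht) (fun j hj => hz3 j hj)
  simp only [Function.iterate_zero, id, if_true, Nat.succ_ne_zero, if_false, sub_zero] at hξeq hηeq
  have hηeq' : Dy F (x, y) = Dy^[N + 1] F (x, η) * (y - φ x) ^ N / (N.factorial : ℝ) := hηeq
  set D := |y - φ x| with hD
  have hD0 : 0 ≤ D := abs_nonneg _
  have hfN : (0 : ℝ) < N.factorial := by exact_mod_cast N.factorial_pos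
  have hfN1 : (1 : ℝ) ≤ (N + 1).factorial := by exact_mod_cast (N + 1).factorial_pos
  have e1 : |F (x, y) - F p| ≤ (a + 1) * D ^ (N + 1) := by
    rw [hξeq, abs_div, abs_mul, abs_pow, ← hD, Nat.abs_cast]
    have := (hb _ (hseg ξ hξ)).1.2.le
    calc |Dy^[N + 1] F (x, ξ)| * D ^ (N + 1) / ((N + 1).factorial : ℝ)
        ≤ |Dy^[N + 1] F (x, ξ)| * D ^ (N + 1) := div_le_self (by positivity) hfN1
      _ ≤ _ := by gcongr
  have e2 : a / 2 / N.factorial * D ^ N ≤ |Dy F (x, y)| := by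
    rw [hηeq', abs_div, abs_mul, abs_pow, ← hD, Nat.abs_cast]
    have := (hb _ (hseg η hη)).1.1.le
    rw [div_mul_eq_mul_div]
    gcongr
  calc |F (x, y) - F p| ^ N ≤ ((a + 1) * D ^ (N + 1)) ^ N := by gcongr
    _ = (a + 1) ^ N / (a / 2 / N.factorial) ^ (N + 1) * (a / 2 / N.factorial * D ^ N) ^ (N + 1) := by
        have : (a / 2 / (N.factorial : ℝ)) ^ (N + 1) ≠ 0 := by positivity
        rw [mul_pow, mul_pow, ← pow_mul, ← pow_mul, mul_comm N (N + 1), ← mul_assoc,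
          div_mul_cancel₀ _ this]
    _ ≤ _ := by gcongr

lemma isolated_countable (S : Set (ℝ × ℝ)) :
    {p | p ∈ S ∧ ∀ᶠ z in 𝓝[≠] p, z ∉ S}.Countable := by
  set A := {p | p ∈ S ∧ ∀ᶠ z in 𝓝[≠] p, z ∉ S} with hA
  have hd : IsDiscrete A := by
    rw [isDiscrete_iff_nhdsNE]
    intro x hx
    rw [← disjoint_iff, disjoint_principal_right]
    filter_upwards [hx.2] with z hz hzA using hz hzA.1
  exact (HereditarilyLindelofSpace.isLindelof A).countable_of_isDiscrete hd

lemma grad_apply {u : E2 → ℝ} {z v : E2} (hu : DifferentiableAt ℝ u z) :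
    fderiv ℝ u z v = inner ℝ (gradient u z) v := by
  have h1 := hu.hasGradientAt.hasFDerivAt.fderiv
  rw [h1, InnerProductSpace.toDual_apply_apply]

lemma good_of_ne {u : E2 → ℝ} {z : E2} (hu : AnalyticAt ℝ u z) (h : fderiv ℝ u z ≠ 0) :
    Good u z := by
  have hpos : 0 < ‖fderiv ℝ u z‖ := norm_pos_iff.2 h
  refine ⟨0, 2 / ‖fderiv ℝ u z‖, by positivity, ?_⟩
  have hc : ContinuousAt (fun w => ‖fderiv ℝ u w‖) z := hu.fderiv.continuousAt.norm
  have hev : ∀ᶠ w in 𝓝 z, ‖fderiv ℝ u z‖ / 2 < ‖fderiv ℝ u w‖ :=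
    continuousAt_const.eventually_lt hc (by linarith)
  filter_upwards [hev] with w hw
  have : ‖gradient u w‖ = ‖fderiv ℝ u w‖ := by simp [gradient]
  rw [this, pow_zero, zero_add, pow_one, div_mul_eq_mul_div, le_div_iff₀ hpos]
  linarith

lemma exists_coords {v : E2} (hv : v ≠ 0) : ∃ L : (ℝ × ℝ) ≃L[ℝ] E2, L (0, 1) = v := by
  let w : E2 := !₂[-(v 1), v 0]
  let M : ℝ × ℝ →ₗ[ℝ] E2 :=
    (LinearMap.toSpanSingleton ℝ E2 w).coprod (LinearMap.toSpanSingleton ℝ E2 v)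
  have hM : ∀ a b : ℝ, M (a, b) = a • w + b • v := by
    intro a b
    simp [M]
  have hinj : Function.Injective M := by
    rw [injective_iff_map_eq_zero]
    rintro ⟨a, b⟩ hab
    rw [hM] at hab
    have h0 : a * (-(v 1)) + b * v 0 = 0 := by
      simpa [w] using congrArg (fun z : E2 => z 0) hab
    have h1 : a * v 0 + b * v 1 = 0 := by
      simpa [w] using congrArg (fun z : E2 => z 1) hab
    have hpos : 0 < v 0 ^ 2 + v 1 ^ 2 := by
      by_contra hcon
      apply hv
      have e0 : v 0 = 0 := by nlinarith [sq_nonneg (v 0), sq_nonneg (v 1)]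
      have e1 : v 1 = 0 := by nlinarith [sq_nonneg (v 0), sq_nonneg (v 1)]
      ext i
      fin_cases i
      · simpa using e0
      · simpa using e1
    have ha : a * (v 0 ^ 2 + v 1 ^ 2) = 0 := by linear_combination (-(v 1)) * h0 + v 0 * h1
    have hb : b * (v 0 ^ 2 + v 1 ^ 2) = 0 := by linear_combination v 0 * h0 + v 1 * h1
    have ha' : a = 0 := (mul_eq_zero.1 ha).resolve_right hpos.ne'
    have hb' : b = 0 := (mul_eq_zero.1 hb).resolve_right hpos.ne'
    rw [ha', hb']; rfl
  let e := LinearEquiv.ofInjectiveOfFinrankEq M hinj (by simp)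
  refine ⟨e.toContinuousLinearEquiv, ?_⟩
  have : e.toContinuousLinearEquiv (0, 1) = M (0, 1) := rfl
  rw [this, hM]
  simp

lemma iteratedDeriv_eq_Dy {F : ℝ × ℝ → ℝ} (hF : AnalyticAt ℝ F 0) (j : ℕ) :
    iteratedDeriv j (fun t => F (0, t)) =ᶠ[𝓝 0] fun t => Dy^[j] F (0, t) := by
  induction j with
  | zero => simp
  | succ j ih =>
    have hline : Tendsto (fun t : ℝ => ((0 : ℝ), t)) (𝓝 0) (𝓝 0) := by
      have : Continuous (fun t : ℝ => ((0 : ℝ), t)) := by fun_prop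
      exact this.tendsto 0
    filter_upwards [ih.eventuallyEq_nhds, hline.eventually hF.eventually_analyticAt] with t h1 h2
    rw [iteratedDeriv_succ, h1.deriv_eq, Function.iterate_succ_apply']
    exact (Dy_hasDerivAt (Dyi_analytic h2 j).differentiableAt).deriv

/-- In suitable coordinates, an analytic function that is not locally constant has some
nonvanishing pure derivative in the second variable. -/
lemma exists_direction {u : E2 → ℝ} {z₀ : E2} (hu : AnalyticAt ℝ u z₀)
    (hnc : ¬ ∀ᶠ z in 𝓝 z₀, u z = u z₀) :
    ∃ L : (ℝ × ℝ) ≃L[ℝ] E2, ∃ N : ℕ,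
      Dy^[N + 1] (fun w => u (z₀ + L w) - u z₀) 0 ≠ 0 := by
  obtain ⟨r, hr, hb⟩ := Metric.eventually_nhds_iff_ball.1 hu.eventually_analyticAt
  have hz : ∃ z ∈ ball z₀ r, u z ≠ u z₀ := by
    by_contra! hcon
    exact hnc (mem_of_superset (ball_mem_nhds z₀ hr) hcon)
  obtain ⟨z, hz, hne⟩ := hz
  have hv : z - z₀ ≠ 0 := by
    intro h
    exact hne (by rw [sub_eq_zero.1 h])
  obtain ⟨L, hL⟩ := exists_coords hv
  refine ⟨L, ?_⟩
  by_contra! hcon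
  set F : ℝ × ℝ → ℝ := fun w => u (z₀ + L w) - u z₀ with hF
  have hL0 : ∀ t : ℝ, L (0, t) = t • (z - z₀) := by
    intro t
    have : ((0 : ℝ), t) = t • ((0 : ℝ), (1 : ℝ)) := by simp
    rw [this, map_smul, hL]
  have hFa : ∀ w, z₀ + L w ∈ ball z₀ r → AnalyticAt ℝ F w := by
    intro w hw
    have h1 : AnalyticAt ℝ (fun w => z₀ + L w) w :=
      analyticAt_const.add ((L : ℝ × ℝ →L[ℝ] E2).analyticAt w)
    exact ((hb _ hw).comp_of_eq h1 rfl).sub analyticAt_const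
  have hF0 : AnalyticAt ℝ F 0 := hFa 0 (by simpa using hr)
  have hline : ∀ t : ℝ, AnalyticAt ℝ (fun t : ℝ => ((0 : ℝ), t)) t := fun t =>
    analyticAt_const.prod analyticAt_id
  have hfa : AnalyticOnNhd ℝ (fun t => F (0, t)) (Icc 0 1) := by
    intro t ht
    refine (hFa (0, t) ?_).comp_of_eq (hline t) rfl
    rw [hL0, mem_ball, dist_eq_norm, add_sub_cancel_left, norm_smul, Real.norm_of_nonneg ht.1]
    have := mem_ball.1 hz
    rw [dist_eq_norm] at this
    have h2 := norm_nonneg (z - z₀)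
    nlinarith [ht.2]
  have h0 : AnalyticAt ℝ (fun t => F (0, t)) 0 := hfa 0 (by simp)
  have hord : analyticOrderAt (fun t => F (0, t)) 0 = ⊤ := by
    rw [ENat.eq_top_iff_forall_ge]
    intro n
    rw [natCast_le_analyticOrderAt_iff_iteratedDeriv_eq_zero h0]
    intro i _
    rw [(iteratedDeriv_eq_Dy hF0 i).self_of_nhds]
    rcases i with _ | i
    · have : L ((0 : ℝ), (0 : ℝ)) = 0 := by rw [hL0]; simp
      simp [hF, this]
    · exact hcon i
  rw [analyticOrderAt_eq_top] at hord
  have := hfa.eqOn_zero_of_preconnected_of_eventuallyEq_zero isPreconnected_Icc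
    (show (0 : ℝ) ∈ Icc (0 : ℝ) 1 by simp) hord (show (1 : ℝ) ∈ Icc (0 : ℝ) 1 by simp)
  simp only [hF, hL0, one_smul, add_sub_cancel, Pi.zero_apply] at this
  exact hne (sub_eq_zero.1 this)

lemma bad_countable {u : E2 → ℝ} {z₀ : E2} (hu : AnalyticAt ℝ u z₀) :
    ∃ R > 0, {z | z ∈ ball z₀ R ∧ ¬ Good u z}.Countable := by
  by_cases hnc : ∀ᶠ z in 𝓝 z₀, u z = u z₀
  · obtain ⟨R, hR, hb⟩ := Metric.eventually_nhds_iff_ball.1 hnc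
    refine ⟨R, hR, ?_⟩
    have : {z | z ∈ ball z₀ R ∧ ¬ Good u z} = ∅ := by
      rw [eq_empty_iff_forall_notMem]
      rintro z ⟨hz, hbad⟩
      apply hbad
      refine ⟨1, 1, one_pos, ?_⟩
      filter_upwards [isOpen_ball.mem_nhds hz] with w hw
      rw [hb w hw, hb z hz]
      simp
    rw [this]
    exact countable_empty
  obtain ⟨L, N, hN⟩ := exists_direction hu hnc
  set F : ℝ × ℝ → ℝ := fun w => u (z₀ + L w) - u z₀ with hF
  set v := L (0, 1) with hv
  let w_of : E2 → ℝ × ℝ := fun z => L.symm (z - z₀)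
  have hwcont : Continuous w_of := L.symm.continuous.comp (continuous_id.sub continuous_const)
  have hwz : ∀ z, z₀ + L (w_of z) = z := by intro z; simp [w_of]
  have hw0 : w_of z₀ = 0 := by simp [w_of]
  have hFan : ∀ z, AnalyticAt ℝ u z → AnalyticAt ℝ F (w_of z) := by
    intro z hz
    have h1 : AnalyticAt ℝ (fun w => z₀ + L w) (w_of z) :=
      analyticAt_const.add ((L : ℝ × ℝ →L[ℝ] E2).analyticAt _)
    exact (hz.comp_of_eq h1 (hwz z)).sub analyticAt_const
  have hFd : ∀ z, AnalyticAt ℝ u z → ∀ d, fderiv ℝ F (w_of z) d = fderiv ℝ u z (L d) := by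
    intro z hz d
    have h1 : HasFDerivAt (fun w => z₀ + L w) (L : ℝ × ℝ →L[ℝ] E2) (w_of z) :=
      (L : ℝ × ℝ →L[ℝ] E2).hasFDerivAt.const_add z₀
    have h2 : HasFDerivAt u (fderiv ℝ u z) (z₀ + L (w_of z)) := by
      rw [hwz]; exact hz.differentiableAt.hasFDerivAt
    have h3 := (h2.comp (w_of z) h1).sub_const (u z₀)
    have h4 : fderiv ℝ F (w_of z) = (fderiv ℝ u z).comp (L : ℝ × ℝ →L[ℝ] E2) := h3.fderiv
    rw [h4]; rfl
  have hFN : ∀ᶠ z in 𝓝 z₀, Dy^[N + 1] F (w_of z) ≠ 0 := by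
    have hc : ContinuousAt (Dy^[N + 1] F) (w_of z₀) := (Dyi_analytic (hFan z₀ hu) _).continuousAt
    exact (hc.comp hwcont.continuousAt).eventually_ne (by simpa [hw0] using hN)
  obtain ⟨R, hR, hb⟩ := Metric.eventually_nhds_iff_ball.1 (hFN.and hu.eventually_analyticAt)
  refine ⟨R, hR, ?_⟩
  have hcount : (⋃ n, {p | p ∈ SS F n ∧ ∀ᶠ z in 𝓝[≠] p, z ∉ SS F n}).Countable :=
    countable_iUnion fun n => isolated_countable _
  refine (hcount.image (fun w => z₀ + L w)).mono ?_
  rintro z ⟨hz, hbad⟩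
  obtain ⟨hzN, hza⟩ := hb z hz
  refine ⟨w_of z, ?_, hwz z⟩
  have hcrit : fderiv ℝ u z = 0 := by
    by_contra hcon
    exact hbad (good_of_ne hza hcon)
  have hex : ∃ n, Dy^[n + 1] F (w_of z) ≠ 0 := ⟨N, hzN⟩
  classical
  let n := Nat.find hex
  have hn1 : Dy^[n + 1] F (w_of z) ≠ 0 := Nat.find_spec hex
  have hn2 : ∀ j < n, Dy^[j + 1] F (w_of z) = 0 := fun j hj => by
    have := Nat.find_min hex hj
    simpa using this
  have hd0 : ∀ d, fderiv ℝ F (w_of z) d = 0 := by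
    intro d
    rw [hFd z hza, hcrit]; rfl
  have hnpos : 0 < n := by
    rcases Nat.eq_zero_or_pos n with h | h
    · rw [h] at hn1
      exact absurd (hd0 (0, 1)) hn1
    · exact h
  have hS : w_of z ∈ SS F n := ⟨hd0 _, hn2, hn1⟩
  refine mem_iUnion.2 ⟨n, hS, ?_⟩
  refine (loja_or_isolated (hFan z hza) hnpos hS).resolve_left ?_
  rintro ⟨C, hC, hev⟩
  apply hbad
  refine ⟨n, C * (‖v‖ + 1) ^ (n + 1), by positivity, ?_⟩
  filter_upwards [hwcont.continuousAt.eventually hev, hza.eventually_analyticAt] with x hx hxa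
  have e1 : F (w_of x) - F (w_of z) = u x - u z := by simp only [hF, hwz]; ring
  have e2 : |Dy F (w_of x)| ≤ (‖v‖ + 1) * ‖gradient u x‖ := by
    have : Dy F (w_of x) = fderiv ℝ u x v := hFd x hxa (0, 1)
    rw [this, grad_apply hxa.differentiableAt]
    have h1 := abs_real_inner_le_norm (gradient u x) v
    have h2 := norm_nonneg (gradient u x)
    nlinarith
  rw [e1] at hx
  calc |u x - u z| ^ n ≤ C * |Dy F (w_of x)| ^ (n + 1) := hx
    _ ≤ C * ((‖v‖ + 1) * ‖gradient u x‖) ^ (n + 1) := by gcongr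
    _ = _ := by rw [mul_pow, mul_assoc]

/-- Lyapunov stability of a local minimum point of a real-analytic function with respect
to the gradient-descent flow: trajectories starting close to the minimum point stay close,
and those defined for all positive times converge. -/
theorem local_min_lyapunov_stable
    (U : Set E2) (hUo : IsOpen U)
    (u : E2 → ℝ) (hu : AnalyticOnNhd ℝ u U)
    (z₀ : E2) (hz₀ : z₀ ∈ U) (hmin : IsLocalMin u z₀) :
    ∀ ε > 0, closedBall z₀ ε ⊆ U →
      ∃ δ > 0,
        (∀ T : ℝ, 0 < T → ∀ γ : ℝ → E2, γ 0 ∈ ball z₀ δ →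
          (∀ t ∈ Ico (0:ℝ) T, HasDerivWithinAt γ (-(gradient u (γ t))) (Ico 0 T) t) →
          ∀ t ∈ Ico (0:ℝ) T, γ t ∈ ball z₀ ε) ∧
        (∀ γ : ℝ → E2, γ 0 ∈ ball z₀ δ →
          (∀ t ∈ Ici (0:ℝ), HasDerivWithinAt γ (-(gradient u (γ t))) (Ici 0) t) →
          (∀ t ∈ Ici (0:ℝ), γ t ∈ ball z₀ ε) ∧
            ∃ zlim ∈ closedBall z₀ ε, Tendsto γ atTop (𝓝 zlim)) := by
  intro ε hε hεU
  obtain ⟨R₁, hR₁, hbad₁⟩ := bad_countable (hu z₀ hz₀)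
  obtain ⟨R₂, hR₂, hmin₂⟩ := Metric.eventually_nhds_iff_ball.1 hmin
  set R := min ε (min R₁ R₂) with hRdef
  have hR : 0 < R := lt_min hε (lt_min hR₁ hR₂)
  have hRε : R ≤ ε := min_le_left _ _
  have hRR₁ : R ≤ R₁ := (min_le_right _ _).trans (min_le_left _ _)
  have hRR₂ : R ≤ R₂ := (min_le_right _ _).trans (min_le_right _ _)
  have hAn : ∀ z ∈ ball z₀ R, AnalyticAt ℝ u z := fun z hz =>
    hu z (hεU (ball_subset_closedBall (ball_subset_ball hRε hz)))
  have hmin' : ∀ z ∈ ball z₀ R, u z₀ ≤ u z := fun z hz => hmin₂ z (ball_subset_ball hRR₂ hz)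
  have hbad : {z | z ∈ ball z₀ R ∧ ¬ Good u z}.Countable :=
    hbad₁.mono (by
      rintro z ⟨hz, hz2⟩
      exact ⟨ball_subset_ball hRR₁ hz, hz2⟩)
  obtain ⟨R', hR', δ, hδ, H⟩ := stab_core hR hAn hmin' hbad
  have hsub : closedBall z₀ R' ⊆ ball z₀ ε := closedBall_subset_ball (hR'.trans_le hRε)
  refine ⟨δ, hδ, ?_, ?_⟩
  · intro T hT γ hγ0 hγ t ht
    have htraj : IsTraj u γ 0 t := by
      refine ⟨fun s hs => ?_, fun s hs => ?_⟩
      · exact (hγ s ⟨hs.1, hs.2.trans_lt ht.2⟩).continuousWithinAt.mono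
          (fun x hx => ⟨hx.1, hx.2.trans_lt ht.2⟩)
      · have hsT : s < T := hs.2.trans ht.2
        refine (hγ s ⟨hs.1, hsT⟩).mono_of_mem_nhdsWithin ?_
        exact mem_of_superset (Ico_mem_nhdsGE hsT) (Ico_subset_Ico_left hs.1)
    exact hsub (H γ t ht.1 htraj hγ0 t (right_mem_Icc.2 ht.1))
  · intro γ hγ0 hγ
    have htraj : ∀ b, IsTraj u γ 0 b := by
      intro b
      refine ⟨fun s hs => ?_, fun s hs => ?_⟩
      · exact (hγ s hs.1).continuousWithinAt.mono (fun x hx => hx.1)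
      · exact (hγ s hs.1).mono (Ici_subset_Ici.2 hs.1)
    have hin : ∀ t, 0 ≤ t → γ t ∈ closedBall z₀ R' := fun t ht =>
      H γ t ht (htraj t) hγ0 t (right_mem_Icc.2 ht)
    refine ⟨fun t ht => hsub (hin t ht), ?_⟩
    obtain ⟨z, hz, hlim⟩ := conv_core hR' hAn hbad γ htraj hin
    exact ⟨z, ball_subset_closedBall (hsub hz), hlim⟩
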